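/- arXiv:2312.03778 — 2 statements merged into one kernel-verified Lean document; each statement's English description precedes it below -/
import Mathlib

section
/- Let q ∈ [2,3], let H be an n×n contraction (H*H ≤ I), and let L be an n×n Hermitian matrix with I − H*H + (q−1)L ≥ 0. Then the trace function φ_q(A) = Tr[(I − H*H + (q−1)L + H* A^{q−1} H)^{1/(q−1)}] is convex on n×n positive definite matrices: for positive definite A₁, A₂ and t ∈ [0,1], φ_q(tA₁ + (1−t)A₂) ≤ t·φ_q(A₁) + (1−t)·φ_q(A₂). -/
open Matrix ComplexOrder

/-- Matrix logarithm of a (positive definite) Hermitian matrix, via functional calculus. -/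
noncomputable def mlog {n : ℕ} (A : Matrix (Fin n) (Fin n) ℂ) : Matrix (Fin n) (Fin n) ℂ :=
  cfc Real.log A

/-- Matrix exponential of a Hermitian matrix, via functional calculus. -/
noncomputable def mexp {n : ℕ} (A : Matrix (Fin n) (Fin n) ℂ) : Matrix (Fin n) (Fin n) ℂ :=
  cfc Real.exp A

/-- Real power of a (positive definite) Hermitian matrix, via functional calculus. -/
noncomputable def mpow {n : ℕ} (A : Matrix (Fin n) (Fin n) ℂ) (p : ℝ) : Matrix (Fin n) (Fin n) ℂ :=
  cfc (fun x : ℝ => x ^ p) A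

/-- Deformed logarithm `log_q x = (x^(q-1) - 1)/(q-1)`. -/
noncomputable def logq (q x : ℝ) : ℝ := (x ^ (q - 1) - 1) / (q - 1)

/-- Deformed exponential `exp_q x = (1 + (q-1)x)^(1/(q-1))`, with `exp_1 = exp`. -/
noncomputable def expq (q x : ℝ) : ℝ :=
  if q = 1 then Real.exp x else (1 + (q - 1) * x) ^ (1 / (q - 1))

/-- Deformed logarithm of a positive definite matrix, via functional calculus. -/
noncomputable def mlogq {n : ℕ} (q : ℝ) (A : Matrix (Fin n) (Fin n) ℂ) :
    Matrix (Fin n) (Fin n) ℂ :=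
  cfc (logq q) A

/-- Deformed exponential of a Hermitian matrix, via functional calculus. -/
noncomputable def mexpq {m : ℕ} (q : ℝ) (A : Matrix (Fin m) (Fin m) ℂ) :
    Matrix (Fin m) (Fin m) ℂ :=
  cfc (expq q) A

/-- Real part of the trace. -/
noncomputable def trRe {n : ℕ} (M : Matrix (Fin n) (Fin n) ℂ) : ℝ := (Matrix.trace M).re

/-- The reduced relative entropy `S_H(A | B) = Tr[A log A - H* A H log B - A + B]`. -/
noncomputable def SH {n : ℕ} (H A B : Matrix (Fin n) (Fin n) ℂ) : ℝ :=
  trRe (A * mlog A - Hᴴ * A * H * mlog B - A + B)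

/-- The reduced Tsallis relative entropy
`S_{H,q}(A | B) = Tr[A^(2-q) log_q A - H* A^(2-q) H log_q B - A + B]`. -/
noncomputable def STq {n : ℕ} (H : Matrix (Fin n) (Fin n) ℂ) (q : ℝ)
    (A B : Matrix (Fin n) (Fin n) ℂ) : ℝ :=
  trRe (mpow A (2 - q) * mlogq q A - Hᴴ * mpow A (2 - q) * H * mlogq q B - A + B)


/-- The trace functional φ_q(A) = Tr[(I - H*H + (q-1)L + H* A^(q-1) H)^(1/(q-1))]. -/
noncomputable def phiq {n : ℕ} (q : ℝ) (H L A : Matrix (Fin n) (Fin n) ℂ) : ℝ :=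
  trRe (mpow (1 - Hᴴ * H + (q - 1) • L + Hᴴ * mpow A (q - 1) * H) (1 / (q - 1)))

/-!
The proof rests on the variational formula
`Tr Y ^ (1 / p) = inf { p⁻¹ Tr (Y Z ^ (1 - p)) + (1 - p⁻¹) Tr Z | Z > 0 }`, a trace form of Young's
inequality. With `Y = K + Hᴴ A ^ p H`, a partial infimum of a jointly convex function is convex, so
it is enough that the expression in braces is jointly convex in `(A, Z)`, and this is Ando's theorem
that `Tr (Hᴴ A ^ p H Z ^ (1 - p))` is jointly convex for `1 ≤ p ≤ 2`; the term in `K = Cᴴ C` is the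
case `A = 1`, `H = C`.

For Ando's theorem with `1 < p < 2`, `a ^ p z ^ (1 - p)` is a positive superposition of the
functions `a² / (a + s z)`, `s > 0`. The quadratic form `⟨A H, (L_A + s R_Z)⁻¹ (A H)⟩` of such a
function is convex in `(A, Z)` because, completing the square, it is the supremum over `W` of
`2 Re ⟨A H, W⟩ - ⟨W, (L_A + s R_Z) W⟩`, which is affine in `(A, Z)`. The endpoints are direct: the
case `p = 1` is linear, and `a² / z` is again such a supremum.
-/

theorem convexOn_of_isLUB_range {E ι : Type*} [AddCommMonoid E] [Module ℝ E] {s : Set E}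
    {f : E → ℝ} {g : ι → E → ℝ} (hs : Convex ℝ s) (hg : ∀ i, ConvexOn ℝ s (g i))
    (hf : ∀ x ∈ s, IsLUB (Set.range fun i => g i x) (f x)) : ConvexOn ℝ s f := by
  refine ⟨hs, fun x hx y hy a b ha hb hab =>
    (isLUB_le_iff (hf _ (hs hx hy ha hb hab))).2 (Set.forall_mem_range.2 fun i => ?_)⟩
  calc g i (a • x + b • y) ≤ a • g i x + b • g i y := (hg i).2 hx hy ha hb hab
    _ ≤ a • f x + b • f y := by
      gcongr
      exacts [(hf x hx).1 ⟨i, rfl⟩, (hf y hy).1 ⟨i, rfl⟩]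

theorem convexOn_of_isGLB_image {E F : Type*} [AddCommMonoid E] [Module ℝ E] [AddCommMonoid F]
    [Module ℝ F] {s : Set E} {t : Set F} {f : E → ℝ} {g : E × F → ℝ}
    (hg : ConvexOn ℝ (s ×ˢ t) g) (hf : ∀ x ∈ s, IsGLB ((fun z => g (x, z)) '' t) (f x)) :
    ConvexOn ℝ s f := by
  have exists_lt {x : E} (hx : x ∈ s) {ε : ℝ} (hε : 0 < ε) : ∃ z ∈ t, g (x, z) < f x + ε := by
    simpa using (isGLB_lt_iff (hf x hx)).1 (lt_add_of_pos_right (f x) hε)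
  have hs : Convex ℝ s := fun x hx y hy a b ha hb hab => by
    obtain ⟨z, hz, -⟩ := exists_lt hx one_pos
    exact (hg.1 (⟨hx, hz⟩ : (x, z) ∈ s ×ˢ t) (⟨hy, hz⟩ : (y, z) ∈ s ×ˢ t) ha hb hab).1
  refine ⟨hs, fun x hx y hy a b ha hb hab => le_of_forall_pos_le_add fun ε hε => ?_⟩
  obtain ⟨z, hz, hxz⟩ := exists_lt hx hε
  obtain ⟨w, hw, hyw⟩ := exists_lt hy hε
  have hxz' : (x, z) ∈ s ×ˢ t := ⟨hx, hz⟩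
  have hyw' : (y, w) ∈ s ×ˢ t := ⟨hy, hw⟩
  calc f (a • x + b • y) ≤ g (a • (x, z) + b • (y, w)) :=
        (hf _ (hs hx hy ha hb hab)).1 ⟨_, (hg.1 hxz' hyw' ha hb hab).2, rfl⟩
    _ ≤ a • g (x, z) + b • g (y, w) := hg.2 hxz' hyw' ha hb hab
    _ ≤ a • (f x + ε) + b • (f y + ε) := by gcongr
    _ = a • f x + b • f y + ε := by
      simp only [smul_eq_mul]
      linear_combination ε * hab

section

open Filter Topology MeasureTheory
open scoped MatrixOrder

variable {m n 𝕜 : Type*} [RCLike 𝕜]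

theorem convex_setOf_posSemidef : Convex ℝ {A : Matrix n n 𝕜 | A.PosSemidef} :=
  fun _ hA _ hB _ _ ha hb _ => (hA.smul ha).add (hB.smul hb)

theorem convex_setOf_posDef : Convex ℝ {A : Matrix n n 𝕜 | A.PosDef} := by
  intro A hA B hB a b ha hb hab
  rcases ha.eq_or_lt with rfl | ha
  · obtain rfl : b = 1 := by simpa using hab
    simpa using hB
  · exact (hA.smul ha).add_posSemidef (hB.posSemidef.smul hb)

variable [Fintype m] [Fintype n]

/-- The real part of the trace, as a real-linear functional; with `𝕜 = ℂ` it gives the values of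
`trRe`. -/
noncomputable def reTrace : Matrix n n 𝕜 →ₗ[ℝ] ℝ :=
  RCLike.reLm ∘ₗ traceLinearMap n ℝ 𝕜

theorem reTrace_mul_comm (A : Matrix m n 𝕜) (B : Matrix n m 𝕜) :
    reTrace (A * B) = reTrace (B * A) :=
  congrArg RCLike.re (trace_mul_comm A B)

theorem reTrace_conjTranspose (A : Matrix n n 𝕜) : reTrace Aᴴ = reTrace A := by
  change RCLike.re (trace Aᴴ) = RCLike.re (trace A)
  simp [trace_conjTranspose]

theorem reTrace_nonneg {A : Matrix n n 𝕜} (hA : A.PosSemidef) : 0 ≤ reTrace A :=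
  (RCLike.nonneg_iff.1 hA.trace_nonneg).1

theorem exists_eq_conjTranspose_mul_self {A : Matrix n n 𝕜} (hA : A.PosSemidef) :
    ∃ C : Matrix n n 𝕜, A = Cᴴ * C := by
  classical exact CStarAlgebra.nonneg_iff_eq_star_mul_self.1 hA.nonneg

theorem reTrace_mul_nonneg {A B : Matrix n n 𝕜} (hA : A.PosSemidef) (hB : B.PosSemidef) :
    0 ≤ reTrace (A * B) := by
  obtain ⟨C, rfl⟩ := exists_eq_conjTranspose_mul_self hB
  rw [← Matrix.mul_assoc, reTrace_mul_comm, ← Matrix.mul_assoc]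
  exact reTrace_nonneg (hA.mul_mul_conjTranspose_same C)

/-- The Sylvester operator `X ↦ α A X + β X Z`, written `α L_A + β R_Z` in terms of left and right
multiplications. Its inverse is the double operator integral of `1 / (α a + β z)`. -/
noncomputable def sylvesterOp (α β : ℝ) (A : Matrix m m 𝕜) (Z : Matrix n n 𝕜) :
    Matrix m n 𝕜 →ₗ[ℝ] Matrix m n 𝕜 :=
  α • mulLeftLinearMap n ℝ A + β • mulRightLinearMap m ℝ Z

theorem sylvesterOp_apply (α β : ℝ) (A : Matrix m m 𝕜) (Z : Matrix n n 𝕜) (X : Matrix m n 𝕜) :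
    sylvesterOp α β A Z X = α • (A * X) + β • (X * Z) :=
  rfl

theorem reTrace_conjTranspose_mul_sylvesterOp (α β : ℝ) {A : Matrix m m 𝕜} (hA : A.IsHermitian)
    {Z : Matrix n n 𝕜} (hZ : Z.IsHermitian) (X Y : Matrix m n 𝕜) :
    reTrace (Xᴴ * sylvesterOp α β A Z Y) = reTrace ((sylvesterOp α β A Z X)ᴴ * Y) := by
  simp only [sylvesterOp_apply, conjTranspose_add, conjTranspose_smul, conjTranspose_mul,
    star_trivial, hA.eq, hZ.eq, Matrix.mul_add, Matrix.add_mul, Matrix.mul_smul, Matrix.smul_mul,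
    map_add, map_smul, Matrix.mul_assoc]
  rw [reTrace_mul_comm Z, Matrix.mul_assoc]

theorem reTrace_conjTranspose_mul_sylvesterOp_self_nonneg {α β : ℝ} (hα : 0 ≤ α) (hβ : 0 ≤ β)
    {A : Matrix m m 𝕜} (hA : A.PosSemidef) {Z : Matrix n n 𝕜} (hZ : Z.PosSemidef)
    (X : Matrix m n 𝕜) : 0 ≤ reTrace (Xᴴ * sylvesterOp α β A Z X) := by
  have hleft : 0 ≤ reTrace (Xᴴ * A * X) := reTrace_nonneg (hA.conjTranspose_mul_mul_same X)
  have hright : 0 ≤ reTrace (Xᴴ * X * Z) :=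
    reTrace_mul_nonneg (posSemidef_conjTranspose_mul_self X) hZ
  simp only [sylvesterOp_apply, Matrix.mul_add, Matrix.mul_smul, map_add, map_smul, smul_eq_mul,
    ← Matrix.mul_assoc]
  positivity

theorem two_mul_reTrace_sylvesterOp_sub_le {α β : ℝ} (hα : 0 ≤ α) (hβ : 0 ≤ β)
    {A : Matrix m m 𝕜} (hA : A.PosSemidef) {Z : Matrix n n 𝕜} (hZ : Z.PosSemidef)
    (V W : Matrix m n 𝕜) :
    2 * reTrace ((sylvesterOp α β A Z V)ᴴ * W) - reTrace (Wᴴ * sylvesterOp α β A Z W) ≤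
      reTrace (Vᴴ * sylvesterOp α β A Z V) := by
  have h := reTrace_conjTranspose_mul_sylvesterOp_self_nonneg hα hβ hA hZ (V - W)
  have hVW := reTrace_conjTranspose_mul_sylvesterOp α β hA.1 hZ.1 V W
  have hWV : reTrace (Wᴴ * sylvesterOp α β A Z V) = reTrace ((sylvesterOp α β A Z V)ᴴ * W) := by
    rw [← reTrace_conjTranspose, conjTranspose_mul, conjTranspose_conjTranspose]
  simp only [map_sub, conjTranspose_sub, Matrix.sub_mul, Matrix.mul_sub] at h
  linarith

variable [DecidableEq m] [DecidableEq n]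

theorem continuousOn_spectrum (A : Matrix n n 𝕜) (f : ℝ → ℝ) :
    ContinuousOn f (spectrum ℝ A) :=
  A.finite_real_spectrum.continuousOn f

theorem posSemidef_cfc {A : Matrix n n 𝕜} {f : ℝ → ℝ} (hf : ∀ a ∈ spectrum ℝ A, 0 ≤ f a) :
    (cfc f A).PosSemidef :=
  (cfc_nonneg hf).posSemidef

theorem posDef_cfc {A : Matrix n n 𝕜} (hA : A.IsHermitian) {f : ℝ → ℝ}
    (hf : ∀ a ∈ spectrum ℝ A, 0 < f a) : (cfc f A).PosDef := by
  refine (posSemidef_cfc fun a ha => (hf a ha).le).posDef_iff_isUnit.2 ?_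
  exact (isUnit_cfc_iff f A (continuousOn_spectrum A f) hA.isSelfAdjoint).2
    fun a ha => (hf a ha).ne'

theorem reTrace_cfc_mono {A : Matrix n n 𝕜} {f g : ℝ → ℝ}
    (hfg : ∀ a ∈ spectrum ℝ A, f a ≤ g a) : reTrace (cfc f A) ≤ reTrace (cfc g A) := by
  have hle : cfc f A ≤ cfc g A :=
    cfc_mono hfg (continuousOn_spectrum A f) (continuousOn_spectrum A g)
  rw [← sub_nonneg, ← map_sub]
  exact reTrace_nonneg (Matrix.le_iff.1 hle)

/-- The orthogonal projection onto the eigenspace of the Hermitian matrix `A` for the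
eigenvalue `a` (zero if `a` is not an eigenvalue). -/
noncomputable def spectralProjection (A : Matrix n n 𝕜) (a : ℝ) : Matrix n n 𝕜 :=
  cfc (Pi.single a 1 : ℝ → ℝ) A

theorem posSemidef_spectralProjection (A : Matrix n n 𝕜) (a : ℝ) :
    (spectralProjection A a).PosSemidef :=
  posSemidef_cfc fun x _ => (Pi.single_nonneg.2 zero_le_one : (0 : ℝ → ℝ) ≤ Pi.single a 1) x

theorem mul_spectralProjection {A : Matrix n n 𝕜} (hA : A.IsHermitian) (a : ℝ) :
    A * spectralProjection A a = a • spectralProjection A a := by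
  calc A * spectralProjection A a = cfc (fun x => x * (Pi.single a 1 : ℝ → ℝ) x) A := by
        rw [cfc_mul _ _ A (continuousOn_spectrum A _) (continuousOn_spectrum A _),
          cfc_id' ℝ A hA.isSelfAdjoint, spectralProjection]
    _ = cfc (fun x => a * (Pi.single a 1 : ℝ → ℝ) x) A := by
        congr 1 with x
        rcases eq_or_ne x a with rfl | hx <;> simp [*]
    _ = a • spectralProjection A a := cfc_const_mul a _ A (continuousOn_spectrum A _)

theorem spectralProjection_mul {A : Matrix n n 𝕜} (hA : A.IsHermitian) (a : ℝ) :
    spectralProjection A a * A = a • spectralProjection A a := by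
  have h := congrArg conjTranspose (mul_spectralProjection hA a)
  rwa [conjTranspose_mul, conjTranspose_smul, hA.eq, (posSemidef_spectralProjection A a).1.eq,
    star_trivial] at h

theorem sum_smul_spectralProjection (A : Matrix n n 𝕜) (f : ℝ → ℝ) :
    ∑ a ∈ A.finite_real_spectrum.toFinset, f a • spectralProjection A a = cfc f A := by
  simp only [spectralProjection, ← cfc_smul (f _) _ A (continuousOn_spectrum A _)]
  rw [← cfc_sum _ A _ fun a _ => continuousOn_spectrum A _]
  refine cfc_congr fun x hx => ?_
  simp [Finset.sum_apply, Pi.single_apply, hx]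

/-- The double operator integral `f(L_A, R_Z) X`: the joint functional calculus of the commuting
operators of left multiplication by `A` and right multiplication by `Z`, applied to `X`. It is
written as a sum over eigenvalues, in terms of the spectral projections of `A` and `Z`. -/
noncomputable def leftRightCfc (f : ℝ → ℝ → ℝ) (A : Matrix m m 𝕜) (Z : Matrix n n 𝕜)
    (X : Matrix m n 𝕜) : Matrix m n 𝕜 :=
  ∑ a ∈ A.finite_real_spectrum.toFinset, ∑ z ∈ Z.finite_real_spectrum.toFinset,
    f a z • (spectralProjection A a * X * spectralProjection Z z)

theorem leftRightCfc_congr {f g : ℝ → ℝ → ℝ} {A : Matrix m m 𝕜} {Z : Matrix n n 𝕜}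
    (hfg : ∀ a ∈ spectrum ℝ A, ∀ z ∈ spectrum ℝ Z, f a z = g a z) (X : Matrix m n 𝕜) :
    leftRightCfc f A Z X = leftRightCfc g A Z X :=
  Finset.sum_congr rfl fun a ha => Finset.sum_congr rfl fun z hz => by
    rw [hfg a (by simpa using ha) z (by simpa using hz)]

theorem mul_leftRightCfc (f : ℝ → ℝ → ℝ) {A : Matrix m m 𝕜} (hA : A.IsHermitian)
    (Z : Matrix n n 𝕜) (X : Matrix m n 𝕜) :
    A * leftRightCfc f A Z X = leftRightCfc (fun a z => a * f a z) A Z X := by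
  simp only [leftRightCfc, Matrix.mul_sum, Matrix.mul_smul, ← Matrix.mul_assoc,
    mul_spectralProjection hA, Matrix.smul_mul, smul_smul, mul_comm]

theorem leftRightCfc_mul (f : ℝ → ℝ → ℝ) (A : Matrix m m 𝕜) {Z : Matrix n n 𝕜}
    (hZ : Z.IsHermitian) (X : Matrix m n 𝕜) :
    leftRightCfc f A Z X * Z = leftRightCfc (fun a z => z * f a z) A Z X := by
  simp only [leftRightCfc, Matrix.sum_mul, Matrix.smul_mul, Matrix.mul_assoc,
    spectralProjection_mul hZ, Matrix.mul_smul, smul_smul, mul_comm]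

theorem leftRightCfc_eq_cfc_mul_mul_cfc (f g : ℝ → ℝ) (A : Matrix m m 𝕜) (Z : Matrix n n 𝕜)
    (X : Matrix m n 𝕜) :
    leftRightCfc (fun a z => f a * g z) A Z X = cfc f A * X * cfc g Z := by
  simp only [leftRightCfc, ← sum_smul_spectralProjection, Matrix.sum_mul, Matrix.mul_sum,
    Matrix.smul_mul, Matrix.mul_smul, Finset.smul_sum, smul_smul]
  rw [Finset.sum_comm]
  simp only [mul_comm]

theorem leftRightCfc_fst {A : Matrix m m 𝕜} (hA : A.IsHermitian) {Z : Matrix n n 𝕜}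
    (hZ : Z.IsHermitian) (X : Matrix m n 𝕜) : leftRightCfc (fun a _ => a) A Z X = A * X := by
  simpa [cfc_id' ℝ A hA.isSelfAdjoint, cfc_const_one ℝ Z hZ.isSelfAdjoint] using
    leftRightCfc_eq_cfc_mul_mul_cfc (fun a => a) (fun _ => 1) A Z X

theorem sylvesterOp_leftRightCfc (α β : ℝ) (f : ℝ → ℝ → ℝ) {A : Matrix m m 𝕜}
    (hA : A.IsHermitian) {Z : Matrix n n 𝕜} (hZ : Z.IsHermitian) (X : Matrix m n 𝕜) :
    sylvesterOp α β A Z (leftRightCfc f A Z X) =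
      leftRightCfc (fun a z => (α * a + β * z) * f a z) A Z X := by
  rw [sylvesterOp_apply, mul_leftRightCfc f hA, leftRightCfc_mul f A hZ]
  simp only [leftRightCfc, Finset.smul_sum, ← Finset.sum_add_distrib, smul_smul, ← add_smul,
    add_mul, mul_assoc]

/-- The quasi-entropy `Re ⟨H, f(L_A, R_Z) H⟩` for the trace inner product. Its values for
`f a z = a ^ p * z ^ (1 - p)` are Ando's functional `Re Tr (Hᴴ A ^ p H Z ^ (1 - p))`. This is Petz's
notion, but for an arbitrary function of two variables in place of a perspective. -/
noncomputable def quasiEntropy (f : ℝ → ℝ → ℝ) (H : Matrix m n 𝕜) (A : Matrix m m 𝕜)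
    (Z : Matrix n n 𝕜) : ℝ :=
  reTrace (Hᴴ * leftRightCfc f A Z H)

theorem quasiEntropy_eq_sum (f : ℝ → ℝ → ℝ) (H : Matrix m n 𝕜) (A : Matrix m m 𝕜)
    (Z : Matrix n n 𝕜) : quasiEntropy f H A Z =
      ∑ a ∈ A.finite_real_spectrum.toFinset, ∑ z ∈ Z.finite_real_spectrum.toFinset,
        f a z * reTrace (Hᴴ * spectralProjection A a * H * spectralProjection Z z) := by
  simp only [quasiEntropy, leftRightCfc, Matrix.mul_sum, Matrix.mul_smul, map_sum, map_smul,
    smul_eq_mul, Matrix.mul_assoc]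

theorem quasiEntropy_eq_reTrace_cfc_mul_cfc (f g : ℝ → ℝ) (H : Matrix m n 𝕜) (A : Matrix m m 𝕜)
    (Z : Matrix n n 𝕜) :
    quasiEntropy (fun a z => f a * g z) H A Z = reTrace (Hᴴ * cfc f A * H * cfc g Z) := by
  simp only [quasiEntropy, leftRightCfc_eq_cfc_mul_mul_cfc, Matrix.mul_assoc]

theorem quasiEntropy_add (f g : ℝ → ℝ → ℝ) (H : Matrix m n 𝕜) (A : Matrix m m 𝕜)
    (Z : Matrix n n 𝕜) : quasiEntropy (fun a z => f a z + g a z) H A Z =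
      quasiEntropy f H A Z + quasiEntropy g H A Z := by
  simp only [quasiEntropy_eq_sum, add_mul, Finset.sum_add_distrib]

theorem quasiEntropy_const_mul (c : ℝ) (f : ℝ → ℝ → ℝ) (H : Matrix m n 𝕜) (A : Matrix m m 𝕜)
    (Z : Matrix n n 𝕜) :
    quasiEntropy (fun a z => c * f a z) H A Z = c * quasiEntropy f H A Z := by
  simp only [quasiEntropy_eq_sum, Finset.mul_sum, mul_assoc]

theorem quasiEntropy_congr {f g : ℝ → ℝ → ℝ} {A : Matrix m m 𝕜} {Z : Matrix n n 𝕜}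
    (hfg : ∀ a ∈ spectrum ℝ A, ∀ z ∈ spectrum ℝ Z, f a z = g a z) (H : Matrix m n 𝕜) :
    quasiEntropy f H A Z = quasiEntropy g H A Z :=
  congrArg (fun X => reTrace (Hᴴ * X)) (leftRightCfc_congr hfg H)

theorem quasiEntropy_mono {f g : ℝ → ℝ → ℝ} {A : Matrix m m 𝕜} {Z : Matrix n n 𝕜}
    (hfg : ∀ a ∈ spectrum ℝ A, ∀ z ∈ spectrum ℝ Z, f a z ≤ g a z) (H : Matrix m n 𝕜) :
    quasiEntropy f H A Z ≤ quasiEntropy g H A Z := by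
  simp only [quasiEntropy_eq_sum]
  refine Finset.sum_le_sum fun a ha => Finset.sum_le_sum fun z hz =>
    mul_le_mul_of_nonneg_right (hfg a (by simpa using ha) z (by simpa using hz)) ?_
  exact reTrace_mul_nonneg ((posSemidef_spectralProjection A a).conjTranspose_mul_mul_same H)
    (posSemidef_spectralProjection Z z)

section Integral

variable {Ω : Type*} [MeasurableSpace Ω] {μ : Measure Ω} {f : Ω → ℝ → ℝ → ℝ}
  {A : Matrix m m 𝕜} {Z : Matrix n n 𝕜}

theorem integrable_quasiEntropy
    (hf : ∀ a ∈ spectrum ℝ A, ∀ z ∈ spectrum ℝ Z, Integrable (fun ω => f ω a z) μ)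
    (H : Matrix m n 𝕜) : Integrable (fun ω => quasiEntropy (f ω) H A Z) μ := by
  simp only [quasiEntropy_eq_sum]
  exact integrable_finsetSum _ fun a ha => integrable_finsetSum _ fun z hz =>
    (hf a (by simpa using ha) z (by simpa using hz)).mul_const _

theorem quasiEntropy_integral
    (hf : ∀ a ∈ spectrum ℝ A, ∀ z ∈ spectrum ℝ Z, Integrable (fun ω => f ω a z) μ)
    (H : Matrix m n 𝕜) :
    quasiEntropy (fun a z => ∫ ω, f ω a z ∂μ) H A Z = ∫ ω, quasiEntropy (f ω) H A Z ∂μ := by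
  have hint (a) (ha : a ∈ A.finite_real_spectrum.toFinset) (z)
      (hz : z ∈ Z.finite_real_spectrum.toFinset) :=
    (hf a (by simpa using ha) z (by simpa using hz)).mul_const
      (reTrace (Hᴴ * spectralProjection A a * H * spectralProjection Z z))
  simp only [quasiEntropy_eq_sum]
  rw [integral_finsetSum _ fun a ha => integrable_finsetSum _ (hint a ha)]
  refine Finset.sum_congr rfl fun a ha => ?_
  rw [integral_finsetSum _ (hint a ha)]
  simp only [integral_mul_const]

end Integral

theorem isGreatest_quasiEntropy_sq_div {α β : ℝ} (hα : 0 ≤ α) (hβ : 0 < β) {A : Matrix m m 𝕜}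
    (hA : A.PosSemidef) {Z : Matrix n n 𝕜} (hZ : Z.PosDef) (H : Matrix m n 𝕜) :
    IsGreatest
      (Set.range fun W => 2 * reTrace (Hᴴ * A * W) - reTrace (Wᴴ * sylvesterOp α β A Z W))
      (quasiEntropy (fun a z => a ^ 2 / (α * a + β * z)) H A Z) := by
  set V := leftRightCfc (fun a z => a / (α * a + β * z)) A Z H
  have hV : sylvesterOp α β A Z V = A * H := by
    rw [sylvesterOp_leftRightCfc α β _ hA.1 hZ.1, ← leftRightCfc_fst hA.1 hZ.1]
    refine leftRightCfc_congr (fun a ha z hz => mul_div_cancel₀ _ ?_) H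
    have := spectrum_nonneg_of_nonneg hA.nonneg ha
    have := hZ.isStrictlyPositive.spectrum_pos hz
    positivity
  have hSV (W : Matrix m n 𝕜) : (sylvesterOp α β A Z V)ᴴ * W = Hᴴ * A * W := by
    rw [hV, conjTranspose_mul, hA.1.eq]
  have hmax : quasiEntropy (fun a z => a ^ 2 / (α * a + β * z)) H A Z =
      reTrace (Vᴴ * sylvesterOp α β A Z V) := by
    rw [reTrace_conjTranspose_mul_sylvesterOp α β hA.1 hZ.1, hSV, Matrix.mul_assoc,
      mul_leftRightCfc _ hA.1, quasiEntropy]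
    simp only [sq, mul_div_assoc]
  rw [hmax]
  refine ⟨⟨V, ?_⟩, Set.forall_mem_range.2 fun W => ?_⟩
  · simp only [← hSV, ← reTrace_conjTranspose_mul_sylvesterOp α β hA.1 hZ.1]
    ring
  · simp only [← hSV]
    exact two_mul_reTrace_sylvesterOp_sub_le hα hβ.le hA hZ.posSemidef V W

theorem convexOn_quasiEntropy_sq_div {α β : ℝ} (hα : 0 ≤ α) (hβ : 0 < β) (H : Matrix m n 𝕜) :
    ConvexOn ℝ ({A : Matrix m m 𝕜 | A.PosSemidef} ×ˢ {Z : Matrix n n 𝕜 | Z.PosDef})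
      fun P => quasiEntropy (fun a z => a ^ 2 / (α * a + β * z)) H P.1 P.2 := by
  have hs := (convex_setOf_posSemidef (n := m) (𝕜 := 𝕜)).prod
    (convex_setOf_posDef (n := n) (𝕜 := 𝕜))
  refine convexOn_of_isLUB_range hs (fun W => ⟨hs, fun P _ Q _ s t _ _ _ => le_of_eq ?_⟩)
    fun P hP => (isGreatest_quasiEntropy_sq_div hα hβ hP.1 hP.2 H).isLUB
  simp only [sylvesterOp_apply, Prod.fst_add, Prod.snd_add, Prod.smul_fst, Prod.smul_snd,
    Matrix.mul_add, Matrix.add_mul, Matrix.mul_smul, Matrix.smul_mul, map_add, map_smul,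
    smul_eq_mul]
  ring

theorem exists_measure_rpow_mul_rpow_eq_integral {p : ℝ} (hp : p ∈ Set.Ioo (1 : ℝ) 2) :
    ∃ μ : Measure ℝ, ∀ a z : ℝ, 0 ≤ a → 0 < z →
      IntegrableOn (fun s => s ^ (p - 2) * (a ^ 2 / (a + s * z))) (Set.Ioi 0) μ ∧
      a ^ p * z ^ (1 - p) = ∫ s in Set.Ioi 0, s ^ (p - 2) * (a ^ 2 / (a + s * z)) ∂μ := by
  obtain ⟨μ, hμ⟩ := Real.exists_measure_rpow_eq_integral_rpowIntegrand₁₂ hp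
  refine ⟨μ, fun a z ha hz => ?_⟩
  have haz : 0 ≤ a / z := by positivity
  obtain ⟨hint, heq⟩ := hμ (a / z) haz
  have hperspective : Set.EqOn (fun s => z * Real.rpowIntegrand₁₂ p s (a / z))
      (fun s => s ^ (p - 2) * (a ^ 2 / (a + s * z))) (Set.Ioi 0) := by
    intro s (hs : 0 < s)
    have hp' : p - 1 ∈ Set.Ioo (0 : ℝ) 1 := ⟨by linarith [hp.1], by linarith [hp.2]⟩
    simp only [Real.rpowIntegrand₁₂_eq_mul_rpowIntegrand₀₁ haz hs,
      Real.rpowIntegrand₀₁_eq_pow_div hp' hs.le haz, show p - 1 - 1 = p - 2 by ring]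
    field_simp
    ring
  refine ⟨IntegrableOn.congr_fun (hint.const_mul z) hperspective measurableSet_Ioi, ?_⟩
  rw [← setIntegral_congr_fun measurableSet_Ioi hperspective, integral_const_mul, ← heq,
    Real.div_rpow ha hz.le, Real.rpow_sub hz, Real.rpow_one]
  ring

theorem convexOn_quasiEntropy_rpow_of_mem_Ioo {p : ℝ} (hp : p ∈ Set.Ioo (1 : ℝ) 2)
    (H : Matrix m n 𝕜) :
    ConvexOn ℝ ({A : Matrix m m 𝕜 | A.PosSemidef} ×ˢ {Z : Matrix n n 𝕜 | Z.PosDef})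
      fun P => quasiEntropy (fun a z => a ^ p * z ^ (1 - p)) H P.1 P.2 := by
  obtain ⟨μ, hμ⟩ := exists_measure_rpow_mul_rpow_eq_integral hp
  let f (s a z : ℝ) : ℝ := s ^ (p - 2) * (a ^ 2 / (a + s * z))
  have hspec {P : Matrix m m 𝕜 × Matrix n n 𝕜}
      (hP : P ∈ {A : Matrix m m 𝕜 | A.PosSemidef} ×ˢ {Z : Matrix n n 𝕜 | Z.PosDef}) (a)
      (ha : a ∈ spectrum ℝ P.1) (z) (hz : z ∈ spectrum ℝ P.2) :=
    hμ a z (spectrum_nonneg_of_nonneg hP.1.nonneg ha) (hP.2.isStrictlyPositive.spectrum_pos hz)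
  have hconvex : ConvexOn ℝ ({A : Matrix m m 𝕜 | A.PosSemidef} ×ˢ {Z : Matrix n n 𝕜 | Z.PosDef})
      fun P => ∫ s in Set.Ioi 0, quasiEntropy (f s) H P.1 P.2 ∂μ := by
    refine integral_convexOn_of_integrand_ae (convexOn_quasiEntropy_sq_div le_rfl one_pos H).1 ?_
      fun P hP => integrable_quasiEntropy (fun a ha z hz => (hspec hP a ha z hz).1) H
    filter_upwards [ae_restrict_mem measurableSet_Ioi] with s (hs : 0 < s)
    simp only [f, quasiEntropy_const_mul]
    simpa only [one_mul, smul_eq_mul] using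
      (convexOn_quasiEntropy_sq_div zero_le_one hs H).smul (Real.rpow_nonneg hs.le (p - 2))
  refine hconvex.congr fun P hP => ?_
  calc ∫ s in Set.Ioi 0, quasiEntropy (f s) H P.1 P.2 ∂μ
      = quasiEntropy (fun a z => ∫ s in Set.Ioi 0, f s a z ∂μ) H P.1 P.2 :=
        (quasiEntropy_integral (fun a ha z hz => (hspec hP a ha z hz).1) H).symm
    _ = quasiEntropy (fun a z => a ^ p * z ^ (1 - p)) H P.1 P.2 :=
        quasiEntropy_congr (fun a ha z hz => (hspec hP a ha z hz).2.symm) H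

theorem convexOn_reTrace_rpow_mul_rpow {p : ℝ} (hp : p ∈ Set.Icc (1 : ℝ) 2) (H : Matrix m n 𝕜) :
    ConvexOn ℝ ({A : Matrix m m 𝕜 | A.PosSemidef} ×ˢ {Z : Matrix n n 𝕜 | Z.PosDef})
      fun P => reTrace (Hᴴ * cfc (fun x : ℝ => x ^ p) P.1 * H *
        cfc (fun x : ℝ => x ^ (1 - p)) P.2) := by
  rcases hp.1.eq_or_lt with rfl | hp1
  · have hlinear : ConvexOn ℝ ({A : Matrix m m 𝕜 | A.PosSemidef} ×ˢ {Z : Matrix n n 𝕜 | Z.PosDef})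
        fun P => reTrace (Hᴴ * P.1 * H) :=
      ⟨convex_setOf_posSemidef.prod convex_setOf_posDef, fun P _ Q _ s t _ _ _ =>
        le_of_eq (by simp [Matrix.mul_add, Matrix.add_mul])⟩
    refine hlinear.congr fun P hP => ?_
    simp [cfc_id' ℝ P.1 hP.1.1.isSelfAdjoint, cfc_const_one ℝ P.2 hP.2.1.isSelfAdjoint]
  simp only [← quasiEntropy_eq_reTrace_cfc_mul_cfc]
  rcases hp.2.eq_or_lt with rfl | hp2
  · refine (convexOn_quasiEntropy_sq_div le_rfl one_pos H).congr fun P _ =>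
      quasiEntropy_congr (fun a _ z _ => ?_) H
    rw [show (1 - 2 : ℝ) = -1 by norm_num, Real.rpow_neg_one, Real.rpow_two]
    ring
  · exact convexOn_quasiEntropy_rpow_of_mem_Ioo ⟨hp1, hp2⟩ H

theorem convexOn_reTrace_mul_rpow {p : ℝ} (hp : p ∈ Set.Icc (1 : ℝ) 2) {K : Matrix n n 𝕜}
    (hK : K.PosSemidef) :
    ConvexOn ℝ {Z : Matrix n n 𝕜 | Z.PosDef}
      fun Z => reTrace (K * cfc (fun x : ℝ => x ^ (1 - p)) Z) := by
  obtain ⟨C, rfl⟩ := exists_eq_conjTranspose_mul_self hK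
  refine ⟨convex_setOf_posDef, fun Z hZ W hW a b ha hb hab => ?_⟩
  have hone : a • (1 : Matrix n n 𝕜) + b • 1 = 1 := by rw [← add_smul, hab, one_smul]
  have h := (convexOn_reTrace_rpow_mul_rpow hp C).2 (x := (1, Z)) (y := (1, W))
    ⟨PosSemidef.one, hZ⟩ ⟨PosSemidef.one, hW⟩ ha hb hab
  simpa [hone, cfc_apply_one] using h

theorem rpow_one_div_le_young {p y z : ℝ} (hp : 1 ≤ p) (hy : 0 ≤ y) (hz : 0 < z) :
    y ^ (1 / p) ≤ 1 / p * (y * z ^ (1 - p)) + (1 - 1 / p) * z := by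
  have hp0 : 0 < p := by linarith
  calc y ^ (1 / p) = (y * z ^ (1 - p)) ^ (1 / p) * z ^ (1 - 1 / p) := by
        rw [Real.mul_rpow hy (by positivity), ← Real.rpow_mul hz.le, mul_assoc, ← Real.rpow_add hz,
          show (1 - p) * (1 / p) + (1 - 1 / p) = 0 by field_simp; ring, Real.rpow_zero, mul_one]
    _ ≤ 1 / p * (y * z ^ (1 - p)) + (1 - 1 / p) * z :=
        Real.geom_mean_le_arith_mean2_weighted (by positivity)
          (sub_nonneg.2 ((div_le_one hp0).2 hp)) (by positivity) hz.le (by ring)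

theorem mul_rpow_one_sub_le {p y w : ℝ} (hp : 0 < p) (hy : 0 ≤ y) (hw : 0 < w)
    (hyw : y ^ (1 / p) ≤ w) : y * w ^ (1 - p) ≤ w := by
  calc y * w ^ (1 - p) = (y ^ (1 / p)) ^ p * w ^ (1 - p) := by
        rw [← Real.rpow_mul hy, one_div_mul_cancel hp.ne', Real.rpow_one]
    _ ≤ w ^ p * w ^ (1 - p) := by gcongr
    _ = w := by rw [← Real.rpow_add hw, add_sub_cancel, Real.rpow_one]

theorem reTrace_rpow_one_div_le {p : ℝ} (hp : 1 ≤ p) {Y Z : Matrix n n 𝕜} (hY : Y.PosSemidef)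
    (hZ : Z.PosDef) :
    reTrace (cfc (fun x : ℝ => x ^ (1 / p)) Y) ≤
      1 / p * reTrace (Y * cfc (fun x : ℝ => x ^ (1 - p)) Z) + (1 - 1 / p) * reTrace Z := by
  have hprod (f g : ℝ → ℝ) :
      quasiEntropy (fun y z => f y * g z) 1 Y Z = reTrace (cfc f Y * cfc g Z) := by
    simp [quasiEntropy_eq_reTrace_cfc_mul_cfc]
  have hY1 := cfc_const_one ℝ Y hY.1.isSelfAdjoint
  have hZ1 := cfc_const_one ℝ Z hZ.1.isSelfAdjoint
  calc reTrace (cfc (fun x : ℝ => x ^ (1 / p)) Y)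
      = quasiEntropy (fun y _ => y ^ (1 / p) * 1) 1 Y Z := by
        rw [hprod (fun y => y ^ (1 / p)) (fun _ => 1), hZ1, Matrix.mul_one]
    _ ≤ quasiEntropy (fun y z => 1 / p * (y * z ^ (1 - p)) + (1 - 1 / p) * (1 * z)) 1 Y Z := by
        refine quasiEntropy_mono (fun y hy z hz => ?_) 1
        simpa using rpow_one_div_le_young hp (spectrum_nonneg_of_nonneg hY.nonneg hy)
          (hZ.isStrictlyPositive.spectrum_pos hz)
    _ = 1 / p * reTrace (Y * cfc (fun x : ℝ => x ^ (1 - p)) Z) + (1 - 1 / p) * reTrace Z := by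
        rw [quasiEntropy_add, quasiEntropy_const_mul, quasiEntropy_const_mul,
          hprod (fun y => y) (fun z => z ^ (1 - p)), hprod (fun _ => 1) (fun z => z), hY1,
          cfc_id' ℝ Y hY.1.isSelfAdjoint, cfc_id' ℝ Z hZ.1.isSelfAdjoint, Matrix.one_mul]

theorem reTrace_mul_rpow_cfc_le {p : ℝ} (hp : 0 < p) {Y : Matrix n n 𝕜} (hY : Y.PosSemidef)
    {h : ℝ → ℝ} (hpos : ∀ y ∈ spectrum ℝ Y, 0 < h y)
    (hle : ∀ y ∈ spectrum ℝ Y, y ^ (1 / p) ≤ h y) :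
    reTrace (Y * cfc (fun x : ℝ => x ^ (1 - p)) (cfc h Y)) ≤ reTrace (cfc h Y) := by
  have hfinite : (h '' spectrum ℝ Y).Finite := Y.finite_real_spectrum.image h
  have hmul : Y * cfc (fun x : ℝ => x ^ (1 - p)) (cfc h Y) =
      cfc (fun y => y * h y ^ (1 - p)) Y := by
    rw [← cfc_comp' _ h Y (hfinite.continuousOn _) (continuousOn_spectrum Y h) hY.1.isSelfAdjoint,
      cfc_mul _ _ Y (continuousOn_spectrum Y _) (continuousOn_spectrum Y _),
      cfc_id' ℝ Y hY.1.isSelfAdjoint]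
  rw [hmul]
  exact reTrace_cfc_mono fun y hy =>
    mul_rpow_one_sub_le hp (spectrum_nonneg_of_nonneg hY.nonneg hy) (hpos y hy) (hle y hy)

theorem isGLB_reTrace_rpow_one_div {p : ℝ} (hp : 1 ≤ p) {Y : Matrix n n 𝕜} (hY : Y.PosSemidef) :
    IsGLB ((fun Z => 1 / p * reTrace (Y * cfc (fun x : ℝ => x ^ (1 - p)) Z) +
        (1 - 1 / p) * reTrace Z) '' {Z | Z.PosDef})
      (reTrace (cfc (fun x : ℝ => x ^ (1 / p)) Y)) := by
  refine ⟨Set.forall_mem_image.2 fun Z hZ => reTrace_rpow_one_div_le hp hY hZ, fun b hb => ?_⟩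
  have hlim : Tendsto
      (fun δ => reTrace (cfc (fun x : ℝ => x ^ (1 / p)) Y) + δ * reTrace (1 : Matrix n n 𝕜))
      (𝓝[>] 0) (𝓝 (reTrace (cfc (fun x : ℝ => x ^ (1 / p)) Y))) :=
    tendsto_nhdsWithin_of_tendsto_nhds (Continuous.tendsto' (by fun_prop) _ _ (by simp))
  refine ge_of_tendsto hlim (eventually_mem_nhdsWithin.mono fun δ (hδ : 0 < δ) => ?_)
  -- The infimum is attained at `Y ^ (1 / p)` if `Y` is invertible; in general, perturb by `δ`.
  set Z := cfc (fun y : ℝ => y ^ (1 / p) + δ) Y with hZ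
  have hpos (y) (hy : y ∈ spectrum ℝ Y) : 0 < y ^ (1 / p) + δ :=
    add_pos_of_nonneg_of_pos (Real.rpow_nonneg (spectrum_nonneg_of_nonneg hY.nonneg hy) _) hδ
  have hle : reTrace (Y * cfc (fun x : ℝ => x ^ (1 - p)) Z) ≤ reTrace Z :=
    reTrace_mul_rpow_cfc_le (zero_lt_one.trans_le hp) hY hpos
      fun y _ => le_add_of_nonneg_right hδ.le
  calc b ≤ 1 / p * reTrace (Y * cfc (fun x : ℝ => x ^ (1 - p)) Z) + (1 - 1 / p) * reTrace Z :=
        hb ⟨Z, posDef_cfc hY.1 hpos, rfl⟩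
    _ ≤ 1 / p * reTrace Z + (1 - 1 / p) * reTrace Z := by gcongr
    _ = reTrace Z := by ring
    _ = reTrace (cfc (fun x : ℝ => x ^ (1 / p)) Y) + δ * reTrace (1 : Matrix n n 𝕜) := by
        rw [hZ, cfc_add_const δ _ Y (continuousOn_spectrum Y _) hY.1.isSelfAdjoint, map_add,
          Algebra.algebraMap_eq_smul_one, map_smul, smul_eq_mul]

theorem stmt7_general {p : ℝ} (hp : p ∈ Set.Icc (1 : ℝ) 2) {K : Matrix n n 𝕜}
    (hK : K.PosSemidef) (H : Matrix m n 𝕜) :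
    ConvexOn ℝ {A : Matrix m m 𝕜 | A.PosSemidef} fun A =>
      reTrace (cfc (fun x : ℝ => x ^ (1 / p)) (K + Hᴴ * cfc (fun x : ℝ => x ^ p) A * H)) := by
  have hs := (convex_setOf_posSemidef (n := m) (𝕜 := 𝕜)).prod
    (convex_setOf_posDef (n := n) (𝕜 := 𝕜))
  have hKpart := ((convexOn_reTrace_mul_rpow hp hK).comp_linearMap
    (LinearMap.snd ℝ (Matrix m m 𝕜) (Matrix n n 𝕜))).subset (fun P hP => hP.2) hs
  have hHpart := convexOn_reTrace_rpow_mul_rpow hp H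
  have htrace : ConvexOn ℝ _ fun P : Matrix m m 𝕜 × Matrix n n 𝕜 => reTrace P.2 :=
    (reTrace.comp (LinearMap.snd ℝ (Matrix m m 𝕜) (Matrix n n 𝕜))).convexOn hs
  have hp0 : 0 < p := zero_lt_one.trans_le hp.1
  have hp_inv : 1 / p ≤ 1 := (div_le_one hp0).2 hp.1
  have hg := ((hKpart.add hHpart).smul (one_div_nonneg.2 hp0.le)).add
    (htrace.smul (sub_nonneg.2 hp_inv))
  refine convexOn_of_isGLB_image hg fun A hA => ?_
  have hY : (K + Hᴴ * cfc (fun x : ℝ => x ^ p) A * H).PosSemidef :=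
    hK.add ((posSemidef_cfc fun a ha => Real.rpow_nonneg (spectrum_nonneg_of_nonneg hA.nonneg ha) p)
      |>.conjTranspose_mul_mul_same H)
  simpa [Matrix.add_mul] using isGLB_reTrace_rpow_one_div hp.1 hY

end

/-- Convexity of φ_q on positive definite matrices for q ∈ [2,3]. -/
theorem stmt7 {n : ℕ} (q : ℝ) (hq : q ∈ Set.Icc (2 : ℝ) 3)
    (H L : Matrix (Fin n) (Fin n) ℂ) (hH : (1 - Hᴴ * H).PosSemidef)
    (hL : L.IsHermitian) (hpos : (1 - Hᴴ * H + (q - 1) • L).PosSemidef)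
    (A₁ A₂ : Matrix (Fin n) (Fin n) ℂ) (hA₁ : A₁.PosDef) (hA₂ : A₂.PosDef)
    (t : ℝ) (ht : t ∈ Set.Icc (0 : ℝ) 1) :
    phiq q H L (t • A₁ + (1 - t) • A₂) ≤ t * phiq q H L A₁ + (1 - t) * phiq q H L A₂ := by
  have hp : q - 1 ∈ Set.Icc (1 : ℝ) 2 := ⟨by linarith [hq.1], by linarith [hq.2]⟩
  exact (stmt7_general hp hpos H).2 hA₁.posSemidef hA₂.posSemidef ht.1 (sub_nonneg.2 ht.2)
    (add_sub_cancel _ _)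
end

section
/- Let q ∈ (1,2], let H₁,…,H_k be m×n complex matrices with H₁*H₁ + ⋯ + H_k*H_k ≤ I_n, and let L be an n×n positive semidefinite matrix. Then the function φ(A₁,…,A_k) = Tr exp_q(L + H₁* log_q(A₁) H₁ + ⋯ + H_k* log_q(A_k) H_k) is jointly concave in tuples (A₁,…,A_k) of m×m positive definite matrices. -/
open Matrix ComplexOrder

/-- The multivariate trace functional φ(A₁,…,A_k) = Tr exp_q(L + Σⱼ Hⱼ* log_q(Aⱼ) Hⱼ). -/
noncomputable def phim {m n k : ℕ} (q : ℝ) (H : Fin k → Matrix (Fin m) (Fin n) ℂ)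
    (L : Matrix (Fin n) (Fin n) ℂ) (A : Fin k → Matrix (Fin m) (Fin m) ℂ) : ℝ :=
  trRe (mexpq q (L + ∑ j, (H j)ᴴ * mlogq q (A j) * H j))

/-!
Write `p = q - 1`. Clearing the denominators in `log_q` and `exp_q` turns the functional into
`Tr (C + ∑ⱼ Hⱼᴴ Aⱼᵖ Hⱼ)^(1/p)`, where `C = 1 - ∑ⱼ Hⱼᴴ Hⱼ + p L` is positive semidefinite.

By the tracial Young inequality, `Tr X^(1/p)` is the maximum over `Z ≥ 0` of
`p⁻¹ (Tr X Z^(1-p) - (1 - p) Tr Z)`, attained at `Z = X^(1/p)`. Partial maximization of a jointly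
concave function leaves a concave function, which reduces the claim to Lieb's theorem: the map
`(A, B) ↦ Tr Kᴴ Aᵖ K B^(1-p)` is jointly concave.

For Lieb's theorem, `aᵖ b^(1-p)` is up to a positive factor the integral over `s > 0` of
`s^(p-1)` times the parallel sum of `s⁻¹ a` and `b`. Substituting left multiplication by `A` for `a`
and right multiplication by `B` for `b`, the quadratic form of this parallel sum at `K` is the
minimum over `X` of `s⁻¹ Tr Xᴴ A X + Tr (K - X)ᴴ (K - X) B`, a minimum of functions that are linear
in `(A, B)`.
-/

open scoped MatrixOrder

section Concavity

variable {E F ι : Type*} [AddCommMonoid E] [Module ℝ E] [AddCommMonoid F] [Module ℝ F]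

theorem concaveOn_of_isLeast {s : Set E} {f : E → ℝ} {g : ι → E → ℝ}
    (hg : ∀ i, ConcaveOn ℝ s (g i)) (hf : ∀ x ∈ s, IsLeast (Set.range fun i => g i x) (f x)) :
    ConcaveOn ℝ s f := by
  have hs : Convex ℝ s := fun x hx => by
    obtain ⟨i, -⟩ := (hf x hx).1
    exact (hg i).1 hx
  refine ⟨hs, fun x hx y hy a b ha hb hab => ?_⟩
  obtain ⟨i, hi : g i (a • x + b • y) = f (a • x + b • y)⟩ := (hf _ (hs hx hy ha hb hab)).1
  calc a • f x + b • f y ≤ a • g i x + b • g i y := by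
        gcongr
        exacts [(hf x hx).2 ⟨i, rfl⟩, (hf y hy).2 ⟨i, rfl⟩]
    _ ≤ f (a • x + b • y) := hi ▸ (hg i).2 hx hy ha hb hab

theorem concaveOn_of_isGreatest {s : Set E} {t : Set F} {f : E → ℝ} {g : E × F → ℝ}
    (hg : ConcaveOn ℝ (s ×ˢ t) g)
    (hf : ∀ x ∈ s, IsGreatest ((fun z => g (x, z)) '' t) (f x)) : ConcaveOn ℝ s f := by
  have hs : Convex ℝ s := fun x hx y hy a b ha hb hab => by
    obtain ⟨z, hz, -⟩ := (hf x hx).1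
    obtain ⟨w, hw, -⟩ := (hf y hy).1
    have hxz : (x, z) ∈ s ×ˢ t := ⟨hx, hz⟩
    have hyw : (y, w) ∈ s ×ˢ t := ⟨hy, hw⟩
    exact (hg.1 hxz hyw ha hb hab).1
  refine ⟨hs, fun x hx y hy a b ha hb hab => ?_⟩
  obtain ⟨z, hz, hzx : g (x, z) = f x⟩ := (hf x hx).1
  obtain ⟨w, hw, hwy : g (y, w) = f y⟩ := (hf y hy).1
  have hxz : (x, z) ∈ s ×ˢ t := ⟨hx, hz⟩
  have hyw : (y, w) ∈ s ×ˢ t := ⟨hy, hw⟩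
  have hmem : a • z + b • w ∈ t := (hg.1 hxz hyw ha hb hab).2
  calc a • f x + b • f y = a • g (x, z) + b • g (y, w) := by rw [hzx, hwy]
    _ ≤ g (a • x + b • y, a • z + b • w) := hg.2 hxz hyw ha hb hab
    _ ≤ f (a • x + b • y) := (hf _ (hs hx hy ha hb hab)).2 ⟨_, hmem, rfl⟩

theorem concaveOn_finset_sum {s : Set E} {f : ι → E → ℝ} (hs : Convex ℝ s) (t : Finset ι)
    (hf : ∀ i ∈ t, ConcaveOn ℝ s (f i)) : ConcaveOn ℝ s fun x => ∑ i ∈ t, f i x := by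
  simp only [← Finset.sum_apply]
  exact Finset.sum_induction f (ConcaveOn ℝ s) (fun _ _ => ConcaveOn.add)
    (concaveOn_const 0 hs) hf

end Concavity

theorem concaveOn_re_trace_mul_mul {𝕜 E l m n : Type*} [RCLike 𝕜] [AddCommGroup E] [Module ℝ E]
    [Fintype l] [Fintype m] [Fintype n] {s : Set E} (hs : Convex ℝ s) (X : Matrix l m 𝕜)
    (f : E →ₗ[ℝ] Matrix m n 𝕜) (Y : Matrix n l 𝕜) :
    ConcaveOn ℝ s fun x => RCLike.re (X * f x * Y).trace := by
  have hlin : IsLinearMap ℝ fun x => RCLike.re (X * f x * Y).trace :=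
    { map_add := fun x y => by
        simp only [map_add, Matrix.mul_add, Matrix.add_mul, trace_add]
      map_smul := fun c x => by
        simp only [map_smul, Matrix.mul_smul, Matrix.smul_mul, trace_smul, RCLike.smul_re,
          smul_eq_mul] }
  exact (hlin.mk' _).concaveOn hs

section RealPowers

variable {A : Type*} [PartialOrder A] [Ring A] [StarRing A] [TopologicalSpace A]
  [StarOrderedRing A] [Algebra ℝ A] [ContinuousFunctionalCalculus ℝ A IsSelfAdjoint]
  [NonnegSpectrumClass ℝ A] {a : A}

theorem cfc_rpow_add_of_nonneg {x y : ℝ} (hx : 0 ≤ x) (hy : 0 ≤ y) :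
    a ^ (x + y) = a ^ x * a ^ y := by
  simp only [CFC.rpow_def]
  rw [← cfc_mul _ _ a (NNReal.continuous_rpow_const hx).continuousOn
    (NNReal.continuous_rpow_const hy).continuousOn]
  exact cfc_congr fun z _ => NNReal.rpow_add_of_nonneg z hx hy

theorem mul_cfc_rpow_inv_rpow_one_sub [IsSemitopologicalRing A] [T2Space A] (ha : 0 ≤ a) {p : ℝ}
    (hp : p ∈ Set.Ioc 0 1) : a * (a ^ p⁻¹) ^ (1 - p) = a ^ p⁻¹ := by
  have hp₀ : 0 ≤ p⁻¹ := inv_nonneg.2 hp.1.le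
  have hp₁ : 0 ≤ 1 - p := sub_nonneg.2 hp.2
  have hexp : 1 + p⁻¹ * (1 - p) = p⁻¹ := by
    rw [mul_sub, inv_mul_cancel₀ hp.1.ne', mul_one, add_sub_cancel]
  calc a * (a ^ p⁻¹) ^ (1 - p) = a ^ (1 : ℝ) * a ^ (p⁻¹ * (1 - p)) := by
        rw [CFC.rpow_one a ha, CFC.rpow_rpow_of_exponent_nonneg a _ _ hp₀ hp₁ ha]
    _ = a ^ p⁻¹ := by rw [← cfc_rpow_add_of_nonneg zero_le_one (mul_nonneg hp₀ hp₁), hexp]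

end RealPowers

theorem add_sum_conjTranspose_mul_rpow_mul_nonneg {𝕜 ι n : Type*} [RCLike 𝕜] [Fintype ι]
    [Finite n] {l : ι → Type*} [∀ j, Fintype (l j)] [∀ j, DecidableEq (l j)] {C : Matrix n n 𝕜}
    (hC : 0 ≤ C) (H : ∀ j, Matrix (l j) n 𝕜) (A : ∀ j, Matrix (l j) (l j) 𝕜) (p : ℝ) :
    0 ≤ C + ∑ j, (H j)ᴴ * A j ^ p * H j :=
  add_nonneg hC <| Finset.sum_nonneg fun j _ =>
    (CFC.rpow_nonneg.posSemidef.conjTranspose_mul_mul_same (H j)).nonneg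

/-- The parallel sum `a : b = (a⁻¹ + b⁻¹)⁻¹` of nonnegative reals, written so that it also covers
`a = 0` and `b = 0`; the value at `a = b = 0` is the intended `0`, since `0 / 0 = 0`. -/
noncomputable def parallelSum (a b : ℝ) : ℝ := a * b / (a + b)

theorem isLeast_parallelSum_mul_norm_sq {E : Type*} [SeminormedAddCommGroup E] [NormedSpace ℝ E]
    {a b : ℝ} (ha : 0 ≤ a) (hb : 0 ≤ b) (z : E) :
    IsLeast (Set.range fun x : E => a * ‖x‖ ^ 2 + b * ‖z - x‖ ^ 2) (parallelSum a b * ‖z‖ ^ 2) := by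
  rcases (add_nonneg ha hb).eq_or_lt' with hab | hab
  · obtain ⟨rfl, rfl⟩ := (add_eq_zero_iff_of_nonneg ha hb).1 hab
    simp [parallelSum]
  refine ⟨⟨(b / (a + b)) • z, ?_⟩, ?_⟩
  · have hsub : z - (b / (a + b)) • z = (a / (a + b)) • z := by
      rw [sub_eq_iff_eq_add, ← add_smul, ← add_div, div_self hab.ne', one_smul]
    simp only [hsub, norm_smul, mul_pow, Real.norm_eq_abs, sq_abs, parallelSum]
    field_simp
    ring
  · rintro _ ⟨x, rfl⟩
    have htri : ‖z‖ ≤ ‖x‖ + ‖z - x‖ := by simpa using norm_add_le x (z - x)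
    rw [parallelSum, div_mul_eq_mul_div, div_le_iff₀ hab]
    calc a * b * ‖z‖ ^ 2 ≤ a * b * (‖x‖ + ‖z - x‖) ^ 2 := by gcongr
      _ ≤ (a * ‖x‖ ^ 2 + b * ‖z - x‖ ^ 2) * (a + b) := by
        linarith [sq_nonneg (a * ‖x‖ - b * ‖z - x‖)]

theorem rpow_mul_parallelSum_inv_mul {p s a b : ℝ} (hp : p ∈ Set.Ioo 0 1) (hs : 0 < s)
    (ha : 0 ≤ a) (hb : 0 ≤ b) :
    s ^ (p - 1) * parallelSum (s⁻¹ * a) b = b * Real.rpowIntegrand₀₁ p s (a / b) := by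
  rcases hb.eq_or_lt' with rfl | hb
  · simp [parallelSum]
  rw [Real.rpowIntegrand₀₁_eq_pow_div hp hs.le (div_nonneg ha hb.le), parallelSum]
  field_simp
  ring

theorem mul_div_rpow_of_nonneg {p a b : ℝ} (hp : p ≠ 1) (ha : 0 ≤ a) (hb : 0 ≤ b) :
    b * (a / b) ^ p = a ^ p * b ^ (1 - p) := by
  rcases hb.eq_or_lt' with rfl | hb
  · simp [Real.zero_rpow (sub_ne_zero.2 hp.symm)]
  rw [Real.div_rpow ha hb.le, Real.rpow_sub hb, Real.rpow_one]
  ring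

open MeasureTheory in
theorem integrableOn_rpow_mul_parallelSum {p a b : ℝ} (hp : p ∈ Set.Ioo 0 1) (ha : 0 ≤ a)
    (hb : 0 ≤ b) :
    IntegrableOn (fun s => s ^ (p - 1) * parallelSum (s⁻¹ * a) b) (Set.Ioi 0) :=
  IntegrableOn.congr_fun ((Real.integrableOn_rpowIntegrand₀₁_Ioi hp (div_nonneg ha hb)).const_mul b)
    (fun _ hs => (rpow_mul_parallelSum_inv_mul hp hs ha hb).symm) measurableSet_Ioi

theorem integral_rpow_mul_parallelSum {p a b : ℝ} (hp : p ∈ Set.Ioo 0 1) (ha : 0 ≤ a)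
    (hb : 0 ≤ b) :
    ∫ s in Set.Ioi 0, s ^ (p - 1) * parallelSum (s⁻¹ * a) b =
      (∫ s in Set.Ioi 0, Real.rpowIntegrand₀₁ p s 1) * (a ^ p * b ^ (1 - p)) := by
  rw [MeasureTheory.setIntegral_congr_fun measurableSet_Ioi fun _ hs =>
      rpow_mul_parallelSum_inv_mul hp hs ha hb, MeasureTheory.integral_const_mul,
    Real.integral_rpowIntegrand₀₁_eq_rpow_mul_const hp (div_nonneg ha hb),
    ← mul_div_rpow_of_nonneg hp.2.ne ha hb]
  ring

section JointSpectralForm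

variable {𝕜 m n : Type*} [RCLike 𝕜] [Fintype m] [DecidableEq m] [Fintype n] [DecidableEq n]

open Classical in
/-- The quadratic form `⟨K, F(L_A, R_B) K⟩` of the joint functional calculus of the commuting
operators `L_A` (left multiplication by `A`) and `R_B` (right multiplication by `B`) on matrices
with the Hilbert-Schmidt inner product: if `A = U diag(a) Uᴴ` and `B = V diag(b) Vᴴ` are Hermitian,
this is `∑ i j, F (a i) (b j) |(Uᴴ K V) i j|²`. The value is `0` if `A` or `B` is not Hermitian. -/
noncomputable def jointSpectralForm (F : ℝ → ℝ → ℝ) (A : Matrix m m 𝕜) (B : Matrix n n 𝕜)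
    (K : Matrix m n 𝕜) : ℝ :=
  if h : A.IsHermitian ∧ B.IsHermitian then
    ∑ i, ∑ j, F (h.1.eigenvalues i) (h.2.eigenvalues j) *
      ‖((h.1.eigenvectorUnitary : Matrix m m 𝕜)ᴴ * K *
        (h.2.eigenvectorUnitary : Matrix n n 𝕜)) i j‖ ^ 2
  else 0

theorem cfc_eq_mul_diagonal_mul {A : Matrix m m 𝕜} (hA : A.IsHermitian) (f : ℝ → ℝ) :
    cfc f A = (hA.eigenvectorUnitary : Matrix m m 𝕜) *
      diagonal (fun i => (f (hA.eigenvalues i) : 𝕜)) *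
        (hA.eigenvectorUnitary : Matrix m m 𝕜)ᴴ := by
  rw [hA.cfc_eq, IsHermitian.cfc, Unitary.conjStarAlgAut_apply]
  rfl

theorem re_trace_conjTranspose_mul_diagonal_mul_mul_diagonal (a : m → ℝ) (b : n → ℝ)
    (M : Matrix m n 𝕜) :
    RCLike.re (Mᴴ * diagonal (fun i => (a i : 𝕜)) * M * diagonal fun j => (b j : 𝕜)).trace =
      ∑ i, ∑ j, a i * b j * ‖M i j‖ ^ 2 := by
  rw [Finset.sum_comm, trace, map_sum]
  refine Finset.sum_congr rfl fun j _ => ?_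
  rw [diag_apply, mul_diagonal, mul_apply, Finset.sum_mul, map_sum]
  refine Finset.sum_congr rfl fun i _ => ?_
  have hterm : star (M i j) * (a i : 𝕜) * M i j * (b j : 𝕜) =
      ((a i * b j * ‖M i j‖ ^ 2 : ℝ) : 𝕜) := by
    push_cast
    rw [← RCLike.conj_mul, starRingEnd_apply]
    ring
  rw [mul_diagonal, conjTranspose_apply, hterm, RCLike.ofReal_re]

variable {A : Matrix m m 𝕜} {B : Matrix n n 𝕜} {F G : ℝ → ℝ → ℝ}

theorem jointSpectralForm_of_isHermitian (hA : A.IsHermitian) (hB : B.IsHermitian) (F : ℝ → ℝ → ℝ)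
    (K : Matrix m n 𝕜) :
    jointSpectralForm F A B K = ∑ i, ∑ j, F (hA.eigenvalues i) (hB.eigenvalues j) *
      ‖((hA.eigenvectorUnitary : Matrix m m 𝕜)ᴴ * K *
        (hB.eigenvectorUnitary : Matrix n n 𝕜)) i j‖ ^ 2 :=
  dif_pos ⟨hA, hB⟩

theorem re_trace_mul_cfc_mul_mul_cfc (f g : ℝ → ℝ) (A : Matrix m m 𝕜) (B : Matrix n n 𝕜)
    (K : Matrix m n 𝕜) :
    RCLike.re (Kᴴ * cfc f A * K * cfc g B).trace =
      jointSpectralForm (fun a b => f a * g b) A B K := by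
  by_cases h : A.IsHermitian ∧ B.IsHermitian
  · obtain ⟨hA, hB⟩ := h
    rw [jointSpectralForm_of_isHermitian hA hB,
      ← re_trace_conjTranspose_mul_diagonal_mul_mul_diagonal, cfc_eq_mul_diagonal_mul hA,
      cfc_eq_mul_diagonal_mul hB, ← Matrix.mul_assoc, trace_mul_comm, conjTranspose_mul,
      conjTranspose_mul, conjTranspose_conjTranspose]
    simp only [Matrix.mul_assoc]
  · rw [jointSpectralForm, dif_neg h]
    rcases not_and_or.1 h with hA | hB
    · have hf : cfc f A = 0 := cfc_apply_of_not_predicate A hA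
      simp only [hf, Matrix.mul_zero, Matrix.zero_mul, trace_zero, map_zero]
    · have hg : cfc g B = 0 := cfc_apply_of_not_predicate B hB
      simp only [hg, Matrix.mul_zero, trace_zero, map_zero]

theorem re_trace_conjTranspose_mul_mul (hA : A.IsHermitian) (hB : B.IsHermitian)
    (K : Matrix m n 𝕜) :
    RCLike.re (Kᴴ * A * K).trace = jointSpectralForm (fun a _ => a) A B K := by
  simpa [cfc_id' ℝ A hA.isSelfAdjoint, cfc_const_one ℝ B hB.isSelfAdjoint] using
    re_trace_mul_cfc_mul_mul_cfc (fun a => a) (fun _ => 1) A B K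

theorem re_trace_conjTranspose_mul_self_mul (hA : A.IsHermitian) (hB : B.IsHermitian)
    (K : Matrix m n 𝕜) :
    RCLike.re (Kᴴ * K * B).trace = jointSpectralForm (fun _ b => b) A B K := by
  simpa [cfc_id' ℝ B hB.isSelfAdjoint, cfc_const_one ℝ A hA.isSelfAdjoint] using
    re_trace_mul_cfc_mul_mul_cfc (fun _ => 1) (fun b => b) A B K

theorem jointSpectralForm_add (F G : ℝ → ℝ → ℝ) (A : Matrix m m 𝕜) (B : Matrix n n 𝕜)
    (K : Matrix m n 𝕜) :
    jointSpectralForm (fun a b => F a b + G a b) A B K =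
      jointSpectralForm F A B K + jointSpectralForm G A B K := by
  unfold jointSpectralForm
  split_ifs
  · simp only [add_mul, Finset.sum_add_distrib]
  · rw [add_zero]

theorem jointSpectralForm_const_mul (c : ℝ) (F : ℝ → ℝ → ℝ) (A : Matrix m m 𝕜)
    (B : Matrix n n 𝕜) (K : Matrix m n 𝕜) :
    jointSpectralForm (fun a b => c * F a b) A B K = c * jointSpectralForm F A B K := by
  unfold jointSpectralForm
  split_ifs
  · simp only [mul_assoc, Finset.mul_sum]
  · rw [mul_zero]

theorem jointSpectralForm_mono (hA : 0 ≤ A) (hB : 0 ≤ B)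
    (hFG : ∀ a b, 0 ≤ a → 0 ≤ b → F a b ≤ G a b) (K : Matrix m n 𝕜) :
    jointSpectralForm F A B K ≤ jointSpectralForm G A B K := by
  rw [nonneg_iff_posSemidef] at hA hB
  rw [jointSpectralForm_of_isHermitian hA.1 hB.1, jointSpectralForm_of_isHermitian hA.1 hB.1]
  gcongr with i _ j _
  exact hFG _ _ (hA.eigenvalues_nonneg i) (hB.eigenvalues_nonneg j)

theorem jointSpectralForm_congr (hA : 0 ≤ A) (hB : 0 ≤ B)
    (hFG : ∀ a b, 0 ≤ a → 0 ≤ b → F a b = G a b) (K : Matrix m n 𝕜) :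
    jointSpectralForm F A B K = jointSpectralForm G A B K :=
  le_antisymm (jointSpectralForm_mono hA hB (fun a b ha hb => (hFG a b ha hb).le) K)
    (jointSpectralForm_mono hA hB (fun a b ha hb => (hFG a b ha hb).ge) K)

section Integral

open MeasureTheory

variable {T : Type*} [MeasurableSpace T] {μ : Measure T} {Φ : T → ℝ → ℝ → ℝ}

theorem integrable_jointSpectralForm (hA : 0 ≤ A) (hB : 0 ≤ B)
    (hΦ : ∀ a b, 0 ≤ a → 0 ≤ b → Integrable (fun t => Φ t a b) μ) (K : Matrix m n 𝕜) :
    Integrable (fun t => jointSpectralForm (Φ t) A B K) μ := by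
  rw [nonneg_iff_posSemidef] at hA hB
  simp only [jointSpectralForm_of_isHermitian hA.1 hB.1]
  exact integrable_finsetSum _ fun i _ => integrable_finsetSum _ fun j _ =>
    (hΦ _ _ (hA.eigenvalues_nonneg i) (hB.eigenvalues_nonneg j)).mul_const _

theorem integral_jointSpectralForm (hA : 0 ≤ A) (hB : 0 ≤ B)
    (hΦ : ∀ a b, 0 ≤ a → 0 ≤ b → Integrable (fun t => Φ t a b) μ) (K : Matrix m n 𝕜) :
    ∫ t, jointSpectralForm (Φ t) A B K ∂μ =
      jointSpectralForm (fun a b => ∫ t, Φ t a b ∂μ) A B K := by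
  rw [nonneg_iff_posSemidef] at hA hB
  have hint (i : m) (j : n) (c : ℝ) :
      Integrable (fun t => Φ t (hA.1.eigenvalues i) (hB.1.eigenvalues j) * c) μ :=
    (hΦ _ _ (hA.eigenvalues_nonneg i) (hB.eigenvalues_nonneg j)).mul_const c
  simp only [jointSpectralForm_of_isHermitian hA.1 hB.1]
  rw [integral_finsetSum _ fun i _ => integrable_finsetSum _ fun j _ => hint i j _]
  refine Finset.sum_congr rfl fun i _ => ?_
  rw [integral_finsetSum _ fun j _ => hint i j _]
  simp only [integral_mul_const]

end Integral

theorem isLeast_jointSpectralForm_parallelSum (hA : 0 ≤ A) (hB : 0 ≤ B) {r : ℝ} (hr : 0 ≤ r)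
    (K : Matrix m n 𝕜) :
    IsLeast (Set.range fun X : Matrix m n 𝕜 =>
        r * RCLike.re (Xᴴ * A * X).trace + RCLike.re ((K - X)ᴴ * (K - X) * B).trace)
      (jointSpectralForm (fun a b => parallelSum (r * a) b) A B K) := by
  rw [nonneg_iff_posSemidef] at hA hB
  set U : Matrix m m 𝕜 := (hA.1.eigenvectorUnitary : Matrix m m 𝕜) with hU
  set V : Matrix n n 𝕜 := (hB.1.eigenvectorUnitary : Matrix n n 𝕜) with hV
  have hentry (i : m) (j : n) := isLeast_parallelSum_mul_norm_sq
    (mul_nonneg hr (hA.eigenvalues_nonneg i)) (hB.eigenvalues_nonneg j) ((Uᴴ * K * V) i j)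
  have hobj (X : Matrix m n 𝕜) :
      r * RCLike.re (Xᴴ * A * X).trace + RCLike.re ((K - X)ᴴ * (K - X) * B).trace =
        ∑ i, ∑ j, (r * hA.1.eigenvalues i * ‖(Uᴴ * X * V) i j‖ ^ 2 +
          hB.1.eigenvalues j * ‖(Uᴴ * K * V) i j - (Uᴴ * X * V) i j‖ ^ 2) := by
    rw [re_trace_conjTranspose_mul_mul hA.1 hB.1, re_trace_conjTranspose_mul_self_mul hA.1 hB.1,
      jointSpectralForm_of_isHermitian hA.1 hB.1, jointSpectralForm_of_isHermitian hA.1 hB.1]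
    simp only [Finset.mul_sum, ← mul_assoc, ← Finset.sum_add_distrib, Matrix.mul_sub,
      Matrix.sub_mul, Matrix.sub_apply, ← hU, ← hV]
  rw [jointSpectralForm_of_isHermitian hA.1 hB.1]
  refine ⟨?_, ?_⟩
  · choose R hR using fun i j => (hentry i j).1
    have hUU : Uᴴ * U = 1 := Unitary.coe_star_mul_self hA.1.eigenvectorUnitary
    have hVV : Vᴴ * V = 1 := Unitary.coe_star_mul_self hB.1.eigenvectorUnitary
    have hX : Uᴴ * (U * Matrix.of R * Vᴴ) * V = Matrix.of R := by
      rw [Matrix.mul_assoc U, ← Matrix.mul_assoc Uᴴ, hUU, Matrix.one_mul, Matrix.mul_assoc, hVV,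
        Matrix.mul_one]
    refine ⟨U * Matrix.of R * Vᴴ, ?_⟩
    simp only [hobj, hX, Matrix.of_apply]
    exact Finset.sum_congr rfl fun i _ => Finset.sum_congr rfl fun j _ => hR i j
  · rintro _ ⟨X, rfl⟩
    simp only [hobj]
    exact Finset.sum_le_sum fun i _ => Finset.sum_le_sum fun j _ => (hentry i j).2 ⟨_, rfl⟩

theorem concaveOn_jointSpectralForm_parallelSum {r : ℝ} (hr : 0 ≤ r) (K : Matrix m n 𝕜) :
    ConcaveOn ℝ (Set.Ici (0 : Matrix m m 𝕜) ×ˢ Set.Ici (0 : Matrix n n 𝕜)) fun AB =>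
      jointSpectralForm (fun a b => parallelSum (r * a) b) AB.1 AB.2 K := by
  set S : Set (Matrix m m 𝕜 × Matrix n n 𝕜) := Set.Ici 0 ×ˢ Set.Ici 0
  have hS : Convex ℝ S := (convex_Ici 0).prod (convex_Ici 0)
  refine concaveOn_of_isLeast (fun X => ?_) fun AB hAB =>
    isLeast_jointSpectralForm_parallelSum hAB.1 hAB.2 hr K
  have hA : ConcaveOn ℝ S fun AB => RCLike.re (Xᴴ * AB.1 * X).trace :=
    concaveOn_re_trace_mul_mul hS Xᴴ (LinearMap.fst ℝ _ _) X
  have hB : ConcaveOn ℝ S fun AB => RCLike.re ((K - X)ᴴ * (K - X) * AB.2).trace := by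
    simpa using concaveOn_re_trace_mul_mul hS ((K - X)ᴴ * (K - X)) (LinearMap.snd ℝ _ _) 1
  exact (hA.smul hr).add hB

theorem re_trace_mul_rpow_mul_mul_rpow (hA : 0 ≤ A) (hB : 0 ≤ B) (x y : ℝ) (K : Matrix m n 𝕜) :
    RCLike.re (Kᴴ * A ^ x * K * B ^ y).trace =
      jointSpectralForm (fun a b => a ^ x * b ^ y) A B K := by
  rw [CFC.rpow_eq_cfc_real hA, CFC.rpow_eq_cfc_real hB, re_trace_mul_cfc_mul_mul_cfc]

open MeasureTheory in
theorem integral_rpow_mul_jointSpectralForm_parallelSum {p : ℝ} (hp : p ∈ Set.Ioo 0 1)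
    (hA : 0 ≤ A) (hB : 0 ≤ B) (K : Matrix m n 𝕜) :
    ∫ s in Set.Ioi 0, s ^ (p - 1) *
        jointSpectralForm (fun a b => parallelSum (s⁻¹ * a) b) A B K =
      (∫ s in Set.Ioi 0, Real.rpowIntegrand₀₁ p s 1) *
        RCLike.re (Kᴴ * A ^ p * K * B ^ (1 - p)).trace := by
  simp only [← jointSpectralForm_const_mul]
  rw [integral_jointSpectralForm hA hB
      (fun a b ha hb => integrableOn_rpow_mul_parallelSum hp ha hb) K,
    jointSpectralForm_congr hA hB fun a b ha hb => integral_rpow_mul_parallelSum hp ha hb,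
    jointSpectralForm_const_mul, re_trace_mul_rpow_mul_mul_rpow hA hB]

theorem lieb_concavity {p : ℝ} (hp : p ∈ Set.Icc 0 1) (K : Matrix m n 𝕜) :
    ConcaveOn ℝ (Set.Ici (0 : Matrix m m 𝕜) ×ˢ Set.Ici (0 : Matrix n n 𝕜)) fun AB =>
      RCLike.re (Kᴴ * AB.1 ^ p * K * AB.2 ^ (1 - p)).trace := by
  set S : Set (Matrix m m 𝕜 × Matrix n n 𝕜) := Set.Ici 0 ×ˢ Set.Ici 0
  have hS : Convex ℝ S := (convex_Ici 0).prod (convex_Ici 0)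
  rcases hp.1.eq_or_lt' with rfl | hp₀
  · refine (concaveOn_re_trace_mul_mul hS (Kᴴ * K) (LinearMap.snd ℝ _ _) 1).congr ?_
    rintro AB ⟨hA, hB⟩
    simp [CFC.rpow_zero AB.1 hA, CFC.rpow_one AB.2 hB]
  rcases hp.2.eq_or_lt with rfl | hp₁
  · refine (concaveOn_re_trace_mul_mul hS Kᴴ (LinearMap.fst ℝ _ _) K).congr ?_
    rintro AB ⟨hA, hB⟩
    simp [CFC.rpow_zero AB.2 hB, CFC.rpow_one AB.1 hA]
  have hp : p ∈ Set.Ioo 0 1 := ⟨hp₀, hp₁⟩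
  set c := ∫ s in Set.Ioi 0, Real.rpowIntegrand₀₁ p s 1
  have hc : 0 < c := Real.integral_rpowIntegrand₀₁_one_pos hp
  have hint : ConcaveOn ℝ S fun AB => ∫ s in Set.Ioi 0, s ^ (p - 1) *
      jointSpectralForm (fun a b => parallelSum (s⁻¹ * a) b) AB.1 AB.2 K := by
    refine MeasureTheory.integral_concaveOn_of_integrand_ae hS ?_ fun AB hAB => ?_
    · filter_upwards [MeasureTheory.ae_restrict_mem measurableSet_Ioi] with s hs
      exact (concaveOn_jointSpectralForm_parallelSum (inv_nonneg.2 hs.le) K).smul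
        (Real.rpow_nonneg hs.le _)
    · simp only [← jointSpectralForm_const_mul]
      exact integrable_jointSpectralForm hAB.1 hAB.2
        (fun a b ha hb => integrableOn_rpow_mul_parallelSum hp ha hb) K
  refine (hint.smul (inv_nonneg.2 hc.le)).congr fun AB hAB => ?_
  beta_reduce
  rw [integral_rpow_mul_jointSpectralForm_parallelSum hp hAB.1 hAB.2, smul_eq_mul,
    inv_mul_cancel_left₀ hc.ne']

theorem concaveOn_re_trace_mul_rpow {C : Matrix n n 𝕜} (hC : 0 ≤ C) {p : ℝ}
    (hp : p ∈ Set.Icc 0 1) :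
    ConcaveOn ℝ (Set.Ici (0 : Matrix n n 𝕜)) fun Z => RCLike.re (C * Z ^ p).trace := by
  obtain ⟨K, rfl⟩ := CStarAlgebra.nonneg_iff_eq_star_mul_self.1 hC
  have hp' : 1 - p ∈ Set.Icc 0 1 := ⟨sub_nonneg.2 hp.2, sub_le_self 1 hp.1⟩
  have hlieb := ((lieb_concavity hp' K).comp_affineMap
    ((AffineMap.const ℝ (Matrix n n 𝕜) 1).prod (AffineMap.id ℝ _))).subset
    (fun Z hZ => ⟨Set.mem_Ici.2 zero_le_one, hZ⟩) (convex_Ici 0)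
  simpa [Function.comp_def, star_eq_conjTranspose] using hlieb

theorem concaveOn_re_trace_add_sum_rpow_mul_rpow {ι : Type*} [Fintype ι] {l : ι → Type*}
    [∀ j, Fintype (l j)] [∀ j, DecidableEq (l j)] {C : Matrix n n 𝕜} (hC : 0 ≤ C)
    (H : ∀ j, Matrix (l j) n 𝕜) {p : ℝ} (hp : p ∈ Set.Icc 0 1) :
    ConcaveOn ℝ (Set.Ici (0 : ∀ j, Matrix (l j) (l j) 𝕜) ×ˢ Set.Ici (0 : Matrix n n 𝕜)) fun AZ =>
      RCLike.re ((C + ∑ j, (H j)ᴴ * AZ.1 j ^ p * H j) * AZ.2 ^ (1 - p)).trace := by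
  set S : Set ((∀ j, Matrix (l j) (l j) 𝕜) × Matrix n n 𝕜) := Set.Ici 0 ×ˢ Set.Ici 0
  have hS : Convex ℝ S := (convex_Ici 0).prod (convex_Ici 0)
  have hconst : ConcaveOn ℝ S fun AZ => RCLike.re (C * AZ.2 ^ (1 - p)).trace :=
    ((concaveOn_re_trace_mul_rpow hC ⟨sub_nonneg.2 hp.2, sub_le_self 1 hp.1⟩).comp_linearMap
      (LinearMap.snd ℝ _ _)).subset (fun AZ hAZ => hAZ.2) hS
  have hterm (j : ι) :
      ConcaveOn ℝ S fun AZ => RCLike.re ((H j)ᴴ * AZ.1 j ^ p * H j * AZ.2 ^ (1 - p)).trace := by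
    have hlieb := (lieb_concavity hp (H j)).comp_linearMap
      ((LinearMap.proj (R := ℝ) (φ := fun j => Matrix (l j) (l j) 𝕜) j).prodMap LinearMap.id)
    exact hlieb.subset (fun AZ hAZ => ⟨hAZ.1 j, hAZ.2⟩) hS
  have hsum := hconst.add (concaveOn_finset_sum hS Finset.univ fun j _ => hterm j)
  refine hsum.congr fun AZ _ => ?_
  simp only [Pi.add_apply, Matrix.add_mul, Finset.sum_mul, trace_add, trace_sum, map_add, map_sum]

theorem re_trace_mul_rpow_le {X Z : Matrix n n 𝕜} (hX : 0 ≤ X) (hZ : 0 ≤ Z) {p : ℝ}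
    (hp : p ∈ Set.Ioc 0 1) :
    RCLike.re (X * Z ^ (1 - p)).trace ≤
      p * RCLike.re (X ^ p⁻¹).trace + (1 - p) * RCLike.re Z.trace := by
  have hform (x z : ℝ) : RCLike.re (X ^ x * Z ^ z).trace =
      jointSpectralForm (fun a b => a ^ x * b ^ z) X Z 1 := by
    simpa using re_trace_mul_rpow_mul_mul_rpow hX hZ x z 1
  calc RCLike.re (X * Z ^ (1 - p)).trace
      = jointSpectralForm (fun a b => a ^ (1 : ℝ) * b ^ (1 - p)) X Z 1 := by
        rw [← hform, CFC.rpow_one X hX]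
    _ ≤ jointSpectralForm
          (fun a b => p * (a ^ p⁻¹ * b ^ (0 : ℝ)) + (1 - p) * (a ^ (0 : ℝ) * b ^ (1 : ℝ))) X Z 1 :=
        jointSpectralForm_mono hX hZ (fun a b ha hb => by
          simpa [← Real.rpow_mul ha, hp.1.ne'] using Real.geom_mean_le_arith_mean2_weighted hp.1.le
            (sub_nonneg.2 hp.2) (Real.rpow_nonneg ha p⁻¹) hb (add_sub_cancel p 1)) 1
    _ = p * RCLike.re (X ^ p⁻¹).trace + (1 - p) * RCLike.re Z.trace := by
        rw [jointSpectralForm_add, jointSpectralForm_const_mul, jointSpectralForm_const_mul,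
          ← hform, ← hform, CFC.rpow_zero Z hZ, CFC.rpow_zero X hX, CFC.rpow_one Z hZ, mul_one,
          one_mul]

theorem isGreatest_re_trace_rpow_inv {X : Matrix n n 𝕜} (hX : 0 ≤ X) {p : ℝ}
    (hp : p ∈ Set.Ioc 0 1) :
    IsGreatest ((fun Z => p⁻¹ * (RCLike.re (X * Z ^ (1 - p)).trace -
      (1 - p) * RCLike.re Z.trace)) '' Set.Ici 0) (RCLike.re (X ^ p⁻¹).trace) := by
  refine ⟨⟨X ^ p⁻¹, Set.mem_Ici.2 CFC.rpow_nonneg, ?_⟩, ?_⟩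
  · beta_reduce
    rw [mul_cfc_rpow_inv_rpow_one_sub hX hp, ← one_sub_mul, sub_sub_cancel,
      inv_mul_cancel_left₀ hp.1.ne']
  · rintro _ ⟨Z, hZ, rfl⟩
    rw [inv_mul_le_iff₀ hp.1, sub_le_iff_le_add]
    exact re_trace_mul_rpow_le hX hZ hp

theorem concaveOn_re_trace_rpow_inv_add_sum_rpow {ι : Type*} [Fintype ι] {l : ι → Type*}
    [∀ j, Fintype (l j)] [∀ j, DecidableEq (l j)] {C : Matrix n n 𝕜} (hC : 0 ≤ C)
    (H : ∀ j, Matrix (l j) n 𝕜) {p : ℝ} (hp : p ∈ Set.Ioc 0 1) :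
    ConcaveOn ℝ (Set.Ici (0 : ∀ j, Matrix (l j) (l j) 𝕜)) fun A =>
      RCLike.re ((C + ∑ j, (H j)ᴴ * A j ^ p * H j) ^ p⁻¹).trace := by
  have hobj := concaveOn_re_trace_add_sum_rpow_mul_rpow hC H (Set.Ioc_subset_Icc_self hp)
  have hlin := concaveOn_re_trace_mul_mul hobj.1 (-1 : Matrix n n 𝕜)
    ((1 - p) • LinearMap.snd ℝ (∀ j, Matrix (l j) (l j) 𝕜) (Matrix n n 𝕜)) 1
  refine concaveOn_of_isGreatest ((hobj.add hlin).smul (inv_nonneg.2 hp.1.le)) fun A _ => ?_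
  simpa [sub_eq_add_neg, RCLike.smul_re] using isGreatest_re_trace_rpow_inv
    (add_sum_conjTranspose_mul_rpow_mul_nonneg hC H A p) hp

end JointSpectralForm

section Phim

variable {m n k : ℕ} {q : ℝ}

theorem smul_mlogq (hq : q ≠ 1) {A : Matrix (Fin m) (Fin m) ℂ} (hA : 0 ≤ A) :
    (q - 1) • mlogq q A = A ^ (q - 1) - 1 := by
  have hc (f : ℝ → ℝ) := A.finite_real_spectrum.continuousOn f
  have hA' : IsSelfAdjoint A := .of_nonneg hA
  rw [mlogq, ← cfc_smul _ _ _ (hc _), CFC.rpow_eq_cfc_real hA, ← cfc_const_one ℝ A hA',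
    ← cfc_sub _ _ _ (hc _) (hc _)]
  refine cfc_congr fun x _ => ?_
  exact mul_div_cancel₀ _ (sub_ne_zero.2 hq)

theorem mexpq_eq_rpow (hq : q ≠ 1) {M : Matrix (Fin n) (Fin n) ℂ} (hM : 0 ≤ 1 + (q - 1) • M) :
    mexpq q M = (1 + (q - 1) • M) ^ (q - 1)⁻¹ := by
  have hq' : q - 1 ≠ 0 := sub_ne_zero.2 hq
  have hM' : IsSelfAdjoint M := by
    have h : (q - 1)⁻¹ • (1 + (q - 1) • M - 1) = M := by
      rw [add_sub_cancel_left, inv_smul_smul₀ hq']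
    rw [← h]
    exact (IsSelfAdjoint.all _).smul ((IsSelfAdjoint.of_nonneg hM).sub (.one _))
  have hc (f : ℝ → ℝ) := M.finite_real_spectrum.continuousOn f
  have haff : 1 + (q - 1) • M = cfc (fun x : ℝ => 1 + (q - 1) * x) M := by
    rw [cfc_add (a := M) (fun _ => (1 : ℝ)) (fun x => (q - 1) * x) (hc _) (hc _),
      cfc_const_one ℝ M hM', cfc_const_mul_id (q - 1) M hM']
  rw [CFC.rpow_eq_cfc_real hM, haff, ← cfc_comp' _ _ M
    ((M.finite_real_spectrum.image _).continuousOn _) (hc _) hM', mexpq]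
  refine cfc_congr fun x _ => ?_
  rw [expq, if_neg hq, one_div]

theorem phim_eq_re_trace_rpow (hq : q ≠ 1) (H : Fin k → Matrix (Fin m) (Fin n) ℂ)
    {L : Matrix (Fin n) (Fin n) ℂ} (hC : 0 ≤ 1 - ∑ j, (H j)ᴴ * H j + (q - 1) • L)
    {A : Fin k → Matrix (Fin m) (Fin m) ℂ} (hA : 0 ≤ A) :
    phim q H L A = (trace ((1 - ∑ j, (H j)ᴴ * H j + (q - 1) • L +
      ∑ j, (H j)ᴴ * A j ^ (q - 1) * H j) ^ (q - 1)⁻¹)).re := by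
  have hlog (j : Fin k) : (q - 1) • ((H j)ᴴ * mlogq q (A j) * H j) =
      (H j)ᴴ * A j ^ (q - 1) * H j - (H j)ᴴ * H j := by
    rw [← Matrix.smul_mul, ← Matrix.mul_smul, smul_mlogq hq (hA j), Matrix.mul_sub,
      Matrix.sub_mul, Matrix.mul_one]
  have harg : 1 + (q - 1) • (L + ∑ j, (H j)ᴴ * mlogq q (A j) * H j) =
      1 - ∑ j, (H j)ᴴ * H j + (q - 1) • L + ∑ j, (H j)ᴴ * A j ^ (q - 1) * H j := by
    rw [smul_add, Finset.smul_sum, Finset.sum_congr rfl fun j _ => hlog j,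
      Finset.sum_sub_distrib]
    abel
  have hnonneg : 0 ≤ 1 + (q - 1) • (L + ∑ j, (H j)ᴴ * mlogq q (A j) * H j) := by
    rw [harg]
    exact add_sum_conjTranspose_mul_rpow_mul_nonneg hC H A (q - 1)
  rw [phim, trRe, mexpq_eq_rpow hq hnonneg, harg]

end Phim

theorem stmt10_general {m n k : ℕ} {q : ℝ} (hq : q ∈ Set.Ioc (1 : ℝ) 2)
    (H : Fin k → Matrix (Fin m) (Fin n) ℂ) {L : Matrix (Fin n) (Fin n) ℂ}
    (hC : (1 - ∑ j, (H j)ᴴ * H j + (q - 1) • L).PosSemidef) :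
    ConcaveOn ℝ {A | ∀ j, (A j).PosSemidef} (phim q H L) := by
  have hp : q - 1 ∈ Set.Ioc (0 : ℝ) 1 := ⟨sub_pos.2 hq.1, by linarith [hq.2]⟩
  have hset : {A : Fin k → Matrix (Fin m) (Fin m) ℂ | ∀ j, (A j).PosSemidef} = Set.Ici 0 := by
    ext A
    exact forall_congr' fun j => nonneg_iff_posSemidef.symm
  rw [hset]
  exact (concaveOn_re_trace_rpow_inv_add_sum_rpow hC.nonneg H hp).congr fun A hA =>
    (phim_eq_re_trace_rpow hq.1.ne' H hC.nonneg hA).symm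

/-- Joint concavity of φ for q ∈ (1,2], Σⱼ Hⱼ*Hⱼ ≤ I and L positive semidefinite. -/
theorem stmt10 {m n k : ℕ} (q : ℝ) (hq : q ∈ Set.Ioc (1 : ℝ) 2)
    (H : Fin k → Matrix (Fin m) (Fin n) ℂ)
    (hH : (1 - ∑ j, (H j)ᴴ * H j).PosSemidef)
    (L : Matrix (Fin n) (Fin n) ℂ) (hL : L.PosSemidef)
    (A B : Fin k → Matrix (Fin m) (Fin m) ℂ)
    (hA : ∀ j, (A j).PosDef) (hB : ∀ j, (B j).PosDef)
    (t : ℝ) (ht : t ∈ Set.Icc (0 : ℝ) 1) :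
    phim q H L (fun j => t • A j + (1 - t) • B j)
      ≥ t * phim q H L A + (1 - t) * phim q H L B :=
  (stmt10_general hq H (hH.add (hL.smul (sub_nonneg.2 hq.1.le)))).2 (fun j => (hA j).posSemidef)
    (fun j => (hB j).posSemidef) ht.1 (sub_nonneg.2 ht.2) (add_sub_cancel t 1)
end
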